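/- Let d ∈ ℕ and define the real polynomial Q(t) = ∑_{j=0}^d (−2)^j binom(t, j), where binom(t, j) = t(t−1)⋯(t−j+1)/j!. Then: (a) Q(j) = (−1)^j for every integer j with 0 ≤ j ≤ d; (b) for all integers l ≥ 0 and s with 1 ≤ s ≤ l+1 one has |Q(−s)| ≤ 2^{d+1} binom(l+d, d). -/

import Mathlib

/-- The polynomial binomial coefficient `binom(t, j) = t(t-1)⋯(t-j+1)/j!` for real `t`. -/
noncomputable def realBinom (t : ℝ) (j : ℕ) : ℝ :=
  (∏ i ∈ Finset.range j, (t - i)) / (Nat.factorial j)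

/-- The interpolation polynomial `Q(t) = ∑_{j=0}^d (-2)^j binom(t,j)`. -/
noncomputable def Qpoly (d : ℕ) (t : ℝ) : ℝ :=
  ∑ j ∈ Finset.range (d + 1), (-2 : ℝ) ^ j * realBinom t j

theorem realBinom_succ (t : ℝ) (j : ℕ) :
    realBinom t (j + 1) * (j + 1) = realBinom t j * (t - j) := by
  unfold realBinom
  rw [Finset.prod_range_succ, Nat.factorial_succ]
  have h : (Nat.factorial j : ℝ) ≠ 0 := by positivity
  have h2 : (j : ℝ) + 1 ≠ 0 := by positivity
  push_cast
  field_simp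

theorem realBinom_nat (n j : ℕ) : realBinom n j = (n.choose j : ℝ) := by
  induction j with
  | zero => simp [realBinom]
  | succ k ih =>
    have h2 : (k : ℝ) + 1 ≠ 0 := by positivity
    apply mul_right_cancel₀ h2
    rw [realBinom_succ, ih]
    rcases le_or_gt k n with h | h
    · have := Nat.choose_succ_right_eq n k
      rw [← Nat.cast_sub h]
      exact_mod_cast this.symm
    · simp [Nat.choose_eq_zero_of_lt h, Nat.choose_eq_zero_of_lt (Nat.lt_succ_of_lt h)]

theorem realBinom_neg (m j : ℕ) :
    realBinom (-((m + 1 : ℕ) : ℝ)) j = (-1) ^ j * ((m + j).choose j : ℝ) := by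
  induction j with
  | zero => simp [realBinom]
  | succ k ih =>
    have h2 : (k : ℝ) + 1 ≠ 0 := by positivity
    apply mul_right_cancel₀ h2
    rw [realBinom_succ, ih]
    have h : (((m + k : ℕ) : ℝ) + 1) * ((m + k).choose k : ℝ)
        = ((m + (k + 1)).choose (k + 1) : ℝ) * ((k : ℝ) + 1) := by
      exact_mod_cast Nat.add_one_mul_choose_eq (m + k) k
    push_cast at h ⊢
    linear_combination (-1) ^ (k + 1) * h

/-- (a) `Q(j) = (-1)^j` for integers `0 ≤ j ≤ d`; (b) `|Q(-s)| ≤ 2^{d+1} binom(l+d, d)`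
for all integers `l ≥ 0` and `1 ≤ s ≤ l+1`. -/
theorem Qpoly_values_and_bound (d : ℕ) :
    (∀ j : ℕ, j ≤ d → Qpoly d j = (-1 : ℝ) ^ j) ∧
    (∀ l s : ℕ, 1 ≤ s → s ≤ l + 1 →
      |Qpoly d (-(s : ℝ))| ≤ 2 ^ (d + 1) * ((l + d).choose d : ℝ)) := by
  constructor
  · intro j hj
    have h := add_pow (-2 : ℝ) 1 j
    have e : (-2 : ℝ) + 1 = -1 := by norm_num
    rw [e] at h
    rw [h]
    unfold Qpoly
    symm
    rw [← Finset.sum_subset (Finset.range_mono (Nat.succ_le_succ hj))]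
    · apply Finset.sum_congr rfl
      intro i _
      rw [realBinom_nat]
      simp
    · intro i _ hi
      have : j < i := by simpa using hi
      rw [realBinom_nat, Nat.choose_eq_zero_of_lt this]
      simp
  · intro l s h1 h2
    obtain ⟨m, rfl⟩ : ∃ m, s = m + 1 := ⟨s - 1, by omega⟩
    have hm : m ≤ l := by omega
    have e : Qpoly d (-((m + 1 : ℕ) : ℝ))
        = ∑ j ∈ Finset.range (d + 1), (2 : ℝ) ^ j * ((m + j).choose j : ℝ) := by
      unfold Qpoly
      apply Finset.sum_congr rfl
      intro j _
      rw [realBinom_neg, ← mul_assoc, ← mul_pow]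
      norm_num
    rw [e, abs_of_nonneg (by positivity)]
    calc ∑ j ∈ Finset.range (d + 1), (2 : ℝ) ^ j * ((m + j).choose j : ℝ)
        ≤ ∑ j ∈ Finset.range (d + 1), (2 : ℝ) ^ j * ((l + d).choose d : ℝ) := by
          apply Finset.sum_le_sum
          intro j hj
          have hj : j ≤ d := by simpa [Nat.lt_succ_iff] using hj
          have h3 : (m + j).choose j ≤ (l + d).choose d := by
            calc (m + j).choose j ≤ (l + j).choose j := Nat.choose_le_choose j (by omega)
              _ = (l + j).choose l := Nat.choose_symm_add.symm
              _ ≤ (l + d).choose l := Nat.choose_le_choose l (by omega)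
              _ = (l + d).choose d := Nat.choose_symm_add
          gcongr
      _ = (2 ^ (d + 1) - 1) * ((l + d).choose d : ℝ) := by
          rw [← Finset.sum_mul, geom_sum_eq (by norm_num)]
          norm_num
      _ ≤ 2 ^ (d + 1) * ((l + d).choose d : ℝ) := by
          gcongr
          linarith
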